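/- Let I be a nonempty finite set and c ∈ ℝ. For each Π ∈ I let d_Π, F_Π, ν_Π be positive integers, α_Π ≥ 1 an integer, and l^Π_1,…,l^Π_{α_Π} positive integers; set m_Π = ∑_{s=1}^{α_Π} l^Π_s. Define S(μ) = ∑_{Π'∈I} m_{Π'}·d_{Π'}·min(μ, ν_{Π'}) for a positive integer μ, ȳ_Π = F_Π·m_Π + c·d_Π·S(ν_Π), n = ∑_{Π∈I} m_Π·d_Π·ν_Π, and A = ∑_{Π∈I} m_Π·d_Π. Let M be the square real matrix indexed by pairs (Π, s) with Π ∈ I and 1 ≤ s ≤ α_Π, with entries M_{(Π,s),(Π',t)} = δ_{(Π,s),(Π',t)}·l^Π_s·ȳ_Π − l^Π_s·l^{Π'}_t·( c·d_Π·d_{Π'}·min(ν_Π, ν_{Π'}) + δ_{Π,Π'}·F_Π ), where δ denotes Kronecker symbols. Then n · A · trace(adjugate M) = (∑_{Π∈I} α_Π) · (∏_{Π∈I} ∏_{s=1}^{α_Π} l^Π_s) · (∏_{Π∈I} d_Π) · c^{|I|−1} · (∏_{Π∈I} S(ν_Π)) · (∏_{Π∈I} ȳ_Π^{α_Π−1}).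 -/

import Mathlib

/-!
Write `i`, `j` for constituents. The rows and columns of `M` sum to zero, so all entries of its
adjugate are equal and the matrix determinant lemma gives
`N * det (M + u vᵀ) = (∑ u) (∑ v) tr (adj M)`, where `N` is the size of `M`. Take
`u = c l d` and `v = l d ν`: on entries this replaces `min (ν i) (ν j)` by `min (ν i) (ν j) - ν j`,
which vanishes when `ν j ≤ ν i`, so `M + u vᵀ` becomes block triangular once the constituents are
sorted by `ν`. Its diagonal blocks are diagonal minus rank one. This proves the formula multiplied
by `c`; cancelling `c` is legitimate when `c` is the variable of a polynomial ring, and the general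
case follows by specialization.
-/

section Determinants

open Matrix Polynomial

variable {n R : Type*} [Fintype n] [DecidableEq n] [CommRing R]

theorem det_smul_one_add_vecMulVec [Nonempty n] (y : R) (u v : n → R) :
    (y • (1 : Matrix n n R) + vecMulVec u v).det
      = y ^ (Fintype.card n - 1) * (y + v ⬝ᵥ u) := by
  have h_charpoly : (y • (1 : Matrix n n R) + vecMulVec u v).det
      = (vecMulVec (-u) v).charpoly.eval y := by
    rw [eval_charpoly, neg_vecMulVec, sub_neg_eq_add, scalar_apply, smul_one_eq_diagonal]
  rw [h_charpoly, charpoly_vecMulVec, ← Nat.sub_add_cancel (Fintype.card_pos (α := n))]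
  simp only [Nat.add_sub_cancel, eval_sub, eval_smul, eval_pow, eval_X, neg_dotProduct, smul_eq_mul,
    dotProduct_comm u v]
  ring

theorem det_add_vecMulVec_of_isLeftRegular {A : Matrix n n R} (hA : IsLeftRegular A.det)
    (u v : n → R) : (A + vecMulVec u v).det = A.det + v ⬝ᵥ (A.adjugate *ᵥ u) := by
  cases isEmpty_or_nonempty n
  · simp
  apply hA.pow (Fintype.card n - 1)
  calc A.det ^ (Fintype.card n - 1) * (A + vecMulVec u v).det
      = (A.adjugate * (A + vecMulVec u v)).det := by rw [det_mul, det_adjugate]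
    _ = (A.det • (1 : Matrix n n R) + vecMulVec (A.adjugate *ᵥ u) v).det := by
      rw [mul_add, adjugate_mul, mul_vecMulVec]
    _ = A.det ^ (Fintype.card n - 1) * (A.det + v ⬝ᵥ (A.adjugate *ᵥ u)) :=
      det_smul_one_add_vecMulVec _ _ _

theorem det_add_vecMulVec (A : Matrix n n R) (u v : n → R) :
    (A + vecMulVec u v).det = A.det + v ⬝ᵥ (A.adjugate *ᵥ u) := by
  -- `X • 1 + A` has monic, hence regular, determinant and specializes to `A` at `X = 0`.
  let B : Matrix n n R[X] := (X : R[X]) • (1 : Matrix n n R[X]) + A.map C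
  let φ : R[X] →+* R := evalRingHom 0
  have hB : IsLeftRegular B.det := (Monic.isRegular (leadingCoeff_det_X_one_add_C A)).left
  have hφB : φ.mapMatrix B = A := by
    ext
    simp [B, φ]
  have hφuv : φ.mapMatrix (vecMulVec (C ∘ u) (C ∘ v)) = vecMulVec u v := by
    ext
    simp [vecMulVec_apply, φ]
  have hφC (w : n → R) : φ ∘ C ∘ w = w := by
    ext
    simp [φ]
  have hφadj : φ ∘ (B.adjugate *ᵥ (C ∘ u)) = A.adjugate *ᵥ u := by
    ext i
    rw [Function.comp_apply, RingHom.map_mulVec, ← RingHom.mapMatrix_apply, RingHom.map_adjugate,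
      hφB, hφC]
  calc (A + vecMulVec u v).det
      = φ (B + vecMulVec (C ∘ u) (C ∘ v)).det := by
        rw [RingHom.map_det, φ.mapMatrix.map_add, hφB, hφuv]
    _ = φ (B.det + (C ∘ v) ⬝ᵥ (B.adjugate *ᵥ (C ∘ u))) := by
        rw [det_add_vecMulVec_of_isLeftRegular hB]
    _ = A.det + v ⬝ᵥ (A.adjugate *ᵥ u) := by
        rw [map_add, RingHom.map_det, hφB, RingHom.map_dotProduct, hφC, hφadj]

theorem adjugate_apply_eq_of_mulVec_one_eq_zero {A : Matrix n n R} (hA : A *ᵥ 1 = 0)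
    (i i' j : n) : A.adjugate i j = A.adjugate i' j := by
  have h_kernel : A.updateRow j (Pi.single i 1 - Pi.single i' 1) *ᵥ 1 = 0 := by
    ext k
    obtain rfl | hk := eq_or_ne k j
    · simp [mulVec, dotProduct]
    · simpa [mulVec, updateRow_ne hk] using congrFun hA k
  have h_det : (A.updateRow j (Pi.single i 1 - Pi.single i' 1)).det = 0 :=
    det_eq_zero_of_mulVec_eq_zero_of_mem_nonZeroDivisors h_kernel (i := i) (one_mem _)
  have h_add := det_updateRow_add A j (Pi.single i 1 - Pi.single i' 1) (Pi.single i' 1)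
  rwa [sub_add_cancel, h_det, zero_add, ← adjugate_apply, ← adjugate_apply] at h_add

theorem card_mul_det_add_vecMulVec {A : Matrix n n R} (hrow : A *ᵥ 1 = 0) (hcol : 1 ᵥ* A = 0)
    (u v : n → R) :
    (Fintype.card n : R) * (A + vecMulVec u v).det
      = (∑ i, u i) * (∑ i, v i) * A.adjugate.trace := by
  cases isEmpty_or_nonempty n
  · simp
  obtain ⟨i₀⟩ := ‹Nonempty n›
  have hcol' : Aᵀ *ᵥ 1 = 0 := by rw [mulVec_transpose, hcol]
  have h_const (i j : n) : A.adjugate i j = A.adjugate i₀ i₀ := by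
    rw [adjugate_apply_eq_of_mulVec_one_eq_zero hrow i i₀ j, ← transpose_apply A.adjugate,
      adjugate_transpose, adjugate_apply_eq_of_mulVec_one_eq_zero hcol' j i₀ i₀,
      ← adjugate_transpose, transpose_apply]
  have h_det : A.det = 0 :=
    det_eq_zero_of_mulVec_eq_zero_of_mem_nonZeroDivisors hrow (i := i₀) (one_mem _)
  rw [det_add_vecMulVec, h_det, zero_add]
  simp only [mulVec, dotProduct, trace, diag_apply, h_const, ← Finset.mul_sum, ← Finset.sum_mul,
    Finset.sum_const, Finset.card_univ, nsmul_eq_mul]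
  ring

theorem det_diagonal_sub_smul_vecMulVec_self [Nonempty n] (l : n → R) (y f : R) :
    (diagonal (fun s => l s * y) - f • vecMulVec l l).det
      = (∏ s, l s) * (y ^ (Fintype.card n - 1) * (y - f * ∑ s, l s)) := by
  have h_factor : diagonal (fun s => l s * y) - f • vecMulVec l l
      = diagonal l * (y • (1 : Matrix n n R) + vecMulVec (fun _ => -f) l) := by
    ext s t
    simp only [diagonal_mul, Matrix.sub_apply, Matrix.add_apply, Matrix.smul_apply, vecMulVec_apply,
      diagonal_apply, one_apply, smul_eq_mul]
    split_ifs <;> ring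
  rw [h_factor, det_mul, det_diagonal, det_smul_one_add_vecMulVec, dotProduct, ← Finset.sum_mul,
    mul_neg, ← sub_eq_add_neg, mul_comm f]

theorem exists_equivFin_monotone_symm {I Λ : Type*} [Fintype I] [LinearOrder Λ] (ν : I → Λ) :
    ∃ e : I ≃ Fin (Fintype.card I), Monotone (ν ∘ e.symm) :=
  ⟨(Fintype.equivFin I).trans (Tuple.sort (ν ∘ (Fintype.equivFin I).symm)).symm,
    Tuple.monotone_sort (ν ∘ (Fintype.equivFin I).symm)⟩

theorem det_eq_prod_det_blockDiag' {I Λ : Type*} {κ : I → Type*} [Fintype I] [DecidableEq I]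
    [∀ i, Fintype (κ i)] [∀ i, DecidableEq (κ i)] [LinearOrder Λ] (ν : I → Λ)
    (N : Matrix (Σ i, κ i) (Σ i, κ i) R)
    (hN : ∀ P Q : Σ i, κ i, P.1 ≠ Q.1 → ν Q.1 ≤ ν P.1 → N P Q = 0) :
    N.det = ∏ i, (N.blockDiag' i).det := by
  obtain ⟨e, he⟩ := exists_equivFin_monotone_symm ν
  have h_triangular : N.BlockTriangular (fun P => e P.1) := by
    intro P Q hQP
    refine hN P Q (fun h => hQP.ne (congrArg e h.symm)) ?_
    simpa using he hQP.le
  rw [h_triangular.det_fintype, ← Equiv.prod_comp e]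
  refine Finset.prod_congr rfl fun i _ => ?_
  let blockEquiv : κ i ≃ {P : Σ i, κ i // e P.1 = e i} :=
    (Equiv.sigmaSubtype i).symm.trans (Equiv.subtypeEquivRight fun _ => e.apply_eq_iff_eq.symm)
  rw [← det_submatrix_equiv_self blockEquiv]
  rfl

end Determinants

/-- The numerical data of a discrete pair: the constituents are indexed by `I` and the cycles over
`i` by `κ i`. The paper's minimum of Speh parameters is encoded as `w (min (ν i) (ν j))`, with `ν`
valued in a linear order and `w` an arbitrary function to the coefficient ring. -/
structure DiscretePairData (I : Type*) (κ : I → Type*) (Λ R : Type*) where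
  /-- rank of the cuspidal support -/
  d : I → R
  /-- order of the fixator `Fix(Π)` -/
  F : I → R
  /-- Speh parameter -/
  ν : I → Λ
  /-- value in the coefficient ring of a Speh parameter -/
  w : Λ → R
  /-- cycle lengths -/
  l : (i : I) → κ i → R

namespace DiscretePairData

open Matrix

variable {I Λ R R' : Type*} {κ : I → Type*} [CommRing R] [CommRing R']
  (D : DiscretePairData I κ Λ R) (f : R →+* R')

/-- Base change of the data along a ring homomorphism. -/
@[simps]
def map : DiscretePairData I κ Λ R' where
  d i := f (D.d i)
  F i := f (D.F i)
  ν := D.ν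
  w x := f (D.w x)
  l i s := f (D.l i s)

variable [∀ i, Fintype (κ i)]

/-- The total cycle length `m_i`. -/
def m (i : I) : R := ∑ s, D.l i s

theorem map_m (i : I) : (D.map f).m i = f (D.m i) := by
  simp [m]

variable [Fintype I] [LinearOrder Λ]

/-- The truncated weighted sum `S(μ)`. -/
def S (μ : Λ) : R := ∑ j, D.m j * D.d j * D.w (min μ (D.ν j))

theorem map_S (μ : Λ) : (D.map f).S μ = f (D.S μ) := by
  simp [S, map_m]

/-- The diagonal weight `ȳ_i`. -/
def ybar (c : R) (i : I) : R := D.F i * D.m i + c * D.d i * D.S (D.ν i)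

theorem map_ybar (c : R) (i : I) : (D.map f).ybar (f c) i = f (D.ybar c i) := by
  simp [ybar, map_m, map_S]

variable [DecidableEq I] [∀ i, DecidableEq (κ i)]

/-- The matrix `M`, as a function of the parameter `c`. -/
def matrix (c : R) : Matrix (Σ i, κ i) (Σ i, κ i) R :=
  of fun P Q => (if P = Q then D.l P.1 P.2 * D.ybar c P.1 else 0)
    - D.l P.1 P.2 * D.l Q.1 Q.2 *
      (c * D.d P.1 * D.d Q.1 * D.w (min (D.ν P.1) (D.ν Q.1)) + if P.1 = Q.1 then D.F P.1 else 0)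

theorem map_matrix (c : R) : (D.map f).matrix (f c) = f.mapMatrix (D.matrix c) := by
  ext P Q
  simp [matrix, map_ybar, apply_ite f]

theorem matrix_mulVec_one (c : R) : D.matrix c *ᵥ 1 = 0 := by
  ext ⟨i, s⟩
  have h_block (j : I) : ∑ t, D.l i s * D.l j t *
        (c * D.d i * D.d j * D.w (min (D.ν i) (D.ν j)) + if i = j then D.F i else 0)
      = D.l i s * (c * D.d i * (D.m j * D.d j * D.w (min (D.ν i) (D.ν j))))
        + if i = j then D.l i s * (D.F i * D.m j) else 0 := by
    rw [← Finset.sum_mul, ← Finset.mul_sum, ← m]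
    split_ifs <;> ring
  simp only [mulVec, dotProduct, matrix, of_apply, Pi.one_apply, mul_one, Finset.sum_sub_distrib,
    Fintype.sum_sigma, h_block, Finset.sum_add_distrib, ← Finset.mul_sum, Finset.sum_ite_eq,
    Finset.mem_univ, if_true, Pi.zero_apply, ybar, S]
  ring

theorem matrix_isSymm (c : R) : (D.matrix c).IsSymm := by
  ext P Q
  simp only [matrix, transpose_apply, of_apply]
  rw [min_comm]
  grind

theorem one_vecMul_matrix (c : R) : 1 ᵥ* D.matrix c = 0 := by
  rw [← mulVec_transpose, (D.matrix_isSymm c).eq, matrix_mulVec_one]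

/-- The rank-one modification of `M` that turns `w (min (ν i) (ν j))` into
`w (min (ν i) (ν j)) - w (ν j)`, which vanishes for `ν j ≤ ν i`. -/
def triangularMatrix (c : R) : Matrix (Σ i, κ i) (Σ i, κ i) R :=
  D.matrix c + vecMulVec (fun P => c * (D.l P.1 P.2 * D.d P.1))
    (fun P => D.l P.1 P.2 * D.d P.1 * D.w (D.ν P.1))

theorem card_mul_det_triangularMatrix (c : R) :
    (∑ i, (Fintype.card (κ i) : R)) * (D.triangularMatrix c).det
      = c * (∑ i, D.m i * D.d i) * (∑ i, D.m i * D.d i * D.w (D.ν i))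
        * (D.matrix c).adjugate.trace := by
  have h := card_mul_det_add_vecMulVec (D.matrix_mulVec_one c) (D.one_vecMul_matrix c)
    (fun P => c * (D.l P.1 P.2 * D.d P.1)) (fun P => D.l P.1 P.2 * D.d P.1 * D.w (D.ν P.1))
  simpa only [triangularMatrix, m, Fintype.card_sigma, Nat.cast_sum, ← Finset.mul_sum,
    Fintype.sum_sigma, ← Finset.sum_mul] using h

theorem triangularMatrix_apply_eq_zero (c : R) {P Q : Σ i, κ i} (hPQ : P.1 ≠ Q.1)
    (hν : D.ν Q.1 ≤ D.ν P.1) : D.triangularMatrix c P Q = 0 := by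
  have hPQ' : P ≠ Q := fun h => hPQ (congrArg Sigma.fst h)
  simp only [triangularMatrix, matrix, Matrix.add_apply, of_apply, vecMulVec_apply, if_neg hPQ,
    if_neg hPQ', min_eq_right hν]
  ring

theorem blockDiag'_triangularMatrix (c : R) (i : I) :
    (D.triangularMatrix c).blockDiag' i
      = diagonal (fun s => D.l i s * D.ybar c i) - D.F i • vecMulVec (D.l i) (D.l i) := by
  ext s t
  simp only [triangularMatrix, matrix, blockDiag'_apply, Matrix.add_apply, of_apply,
    vecMulVec_apply, Matrix.sub_apply, Matrix.smul_apply, diagonal_apply, Sigma.mk.injEq, heq_eq_eq,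
    true_and, if_true, min_self, smul_eq_mul]
  ring

theorem det_triangularMatrix [∀ i, Nonempty (κ i)] (c : R) :
    (D.triangularMatrix c).det
      = ∏ i, (∏ s, D.l i s) *
          (D.ybar c i ^ (Fintype.card (κ i) - 1) * (c * D.d i * D.S (D.ν i))) := by
  rw [det_eq_prod_det_blockDiag' D.ν _ fun P Q => D.triangularMatrix_apply_eq_zero c]
  refine Finset.prod_congr rfl fun i _ => ?_
  rw [blockDiag'_triangularMatrix, det_diagonal_sub_smul_vecMulVec_self, ← m]
  congr 2
  rw [ybar, add_sub_cancel_left]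

theorem mul_trace_adjugate_matrix [Nonempty I] [∀ i, Nonempty (κ i)] (c : R) :
    c * ((∑ i, D.m i * D.d i * D.w (D.ν i)) * (∑ i, D.m i * D.d i)
        * (D.matrix c).adjugate.trace)
      = c * ((∑ i, (Fintype.card (κ i) : R)) * (∏ i, ∏ s, D.l i s) * (∏ i, D.d i)
        * c ^ (Fintype.card I - 1) * (∏ i, D.S (D.ν i))
        * ∏ i, D.ybar c i ^ (Fintype.card (κ i) - 1)) := by
  have h := D.card_mul_det_triangularMatrix c
  have hpow : c ^ Fintype.card I = c * c ^ (Fintype.card I - 1) := by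
    rw [← pow_succ', Nat.sub_add_cancel Fintype.card_pos]
  simp only [det_triangularMatrix, Finset.prod_mul_distrib, Finset.prod_const, Finset.card_univ,
    hpow] at h
  linear_combination -h

end DiscretePairData

open DiscretePairData Polynomial in
theorem stmt_10_general {I Λ R : Type*} {κ : I → Type*} [Fintype I] [DecidableEq I] [Nonempty I]
    [∀ i, Fintype (κ i)] [∀ i, DecidableEq (κ i)] [∀ i, Nonempty (κ i)] [LinearOrder Λ]
    [CommRing R] (D : DiscretePairData I κ Λ R) (c : R) :
    (∑ i, D.m i * D.d i * D.w (D.ν i)) * (∑ i, D.m i * D.d i) * (D.matrix c).adjugate.trace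
      = (∑ i, (Fintype.card (κ i) : R)) * (∏ i, ∏ s, D.l i s) * (∏ i, D.d i)
        * c ^ (Fintype.card I - 1) * (∏ i, D.S (D.ν i))
        * ∏ i, D.ybar c i ^ (Fintype.card (κ i) - 1) := by
  let φ : R[X] →+* R := evalRingHom c
  have hφX : φ X = c := eval_X
  have hφD : (D.map C).map φ = D := by simp [DiscretePairData.map, φ]
  have hφC (r : R) : φ (C r) = r := eval_C
  have h := congrArg φ (isRegular_X.left ((D.map C).mul_trace_adjugate_matrix X))
  simp only [map_mul, map_sum, map_prod, map_pow, map_natCast, AddMonoidHom.map_trace,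
    ← RingHom.mapMatrix_apply, RingHom.map_adjugate, ← map_matrix, ← map_ybar, ← map_S, ← map_m,
    hφD, hφX] at h
  simpa only [map_d, map_w, map_ν, map_l, hφC] using h

/-- The evaluation of `κ(M)` in the proof of Théorème 6.8: for the singular
matrix `M` indexed by pairs `(π, s)` with entries
`M_{(π,s),(π',t)} = δ_{(π,s),(π',t)}·l^Π_s·ȳ_Π − l^Π_s·l^{π'}_t·(c·d_Π·d_{π'}·min(ν_π,ν_{π'}) + δ_{π,π'}·F_π)`,
one has
`n·A·trace(adjugate M) = (∑ α_π)·(∏∏ l^Π_s)·(∏ d_π)·c^{|I|−1}·(∏ S(ν_π))·(∏ ȳ_Π^{α_Π−1})`. -/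
theorem stmt_10 (I : Type) [Fintype I] [DecidableEq I] [Nonempty I] (c : ℝ)
    (d F ν : I → ℕ) (hd : ∀ π, 0 < d π) (hF : ∀ π, 0 < F π) (hν : ∀ π, 0 < ν π)
    (α : I → ℕ) (hα : ∀ π, 1 ≤ α π)
    (l : (π : I) → Fin (α π) → ℕ) (hl : ∀ π s, 0 < l π s)
    (m : I → ℕ) (hm : ∀ π, m π = ∑ s, l π s)
    (S : ℕ → ℕ) (hS : ∀ μ : ℕ, S μ = ∑ π' : I, m π' * d π' * min μ (ν π'))
    (ybar : I → ℝ)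
    (hybar : ∀ π, ybar π = (F π : ℝ) * (m π : ℝ) + c * (d π : ℝ) * (S (ν π) : ℝ))
    (n A : ℕ) (hn : n = ∑ π : I, m π * d π * ν π) (hA : A = ∑ π : I, m π * d π)
    (M : Matrix (Σ π : I, Fin (α π)) (Σ π : I, Fin (α π)) ℝ)
    (hM : ∀ P Q : Σ π : I, Fin (α π), M P Q
      = (if P = Q then (l P.1 P.2 : ℝ) * ybar P.1 else 0)
        - (l P.1 P.2 : ℝ) * (l Q.1 Q.2 : ℝ) *
            (c * (d P.1 : ℝ) * (d Q.1 : ℝ) * ((min (ν P.1) (ν Q.1) : ℕ) : ℝ)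
              + if P.1 = Q.1 then (F P.1 : ℝ) else 0)) :
    (n : ℝ) * (A : ℝ) * Matrix.trace M.adjugate
      = ((∑ π : I, α π : ℕ) : ℝ) * ((∏ π : I, ∏ s, l π s : ℕ) : ℝ)
          * ((∏ π : I, d π : ℕ) : ℝ) * c ^ (Fintype.card I - 1)
          * (∏ π : I, (S (ν π) : ℝ)) * (∏ π : I, ybar π ^ (α π - 1)) := by
  have : ∀ π, Nonempty (Fin (α π)) := fun π => ⟨⟨0, hα π⟩⟩
  let D : DiscretePairData I (fun π => Fin (α π)) ℕ ℝ :=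
    ⟨fun π => d π, fun π => F π, ν, Nat.cast, fun π s => l π s⟩
  have hmD (π : I) : D.m π = m π := by simp [D, DiscretePairData.m, hm]
  have hSD (μ : ℕ) : D.S μ = S μ := by simp [D, DiscretePairData.S, hmD, hS]
  obtain rfl : ybar = D.ybar c := by ext; simp [D, DiscretePairData.ybar, hmD, hSD, hybar]
  obtain rfl : M = D.matrix c := by ext; simp [D, DiscretePairData.matrix, hM]
  simpa [D, hmD, hSD, hn, hA] using stmt_10_general D c
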